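/- Characterisation of CBN and CBV normalisation: for every term t of the λ-calculus with explicit substitutions, (1) t is typable in system N if and only if t is →n-normalising; moreover, if Φ derives Γ ⊢ t : τ in N and t →n* p with p a →n-normal form reached in b dB-steps and e s-steps, then |Φ|_n ≥ b + e + |p|_n; (2) t is typable in system V if and only if t is →v-normalising; moreover, if Φ derives Γ ⊢ t : τ in V and t →v* p with p a →v-normal form reached in b dB-steps and e sv-steps, then |Φ|_v ≥ b + e + |p|_v. -/

import Mathlib

/-! # The Bang Calculus Revisited: common definitions.

Terms are represented with de Bruijn indices, so that all the meta-level
substitutions are capture-avoiding by construction. -/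

/-- Terms of the λ!-calculus.  `esub t u` is the explicit substitution
`t[0\u]`: the (anonymous) binder scopes over `t`, not over `u`. -/
inductive Tm : Type
  | var : ℕ → Tm
  | app : Tm → Tm → Tm
  | lam : Tm → Tm
  | bang : Tm → Tm
  | der : Tm → Tm
  | esub : Tm → Tm → Tm
  deriving DecidableEq

namespace Tm

/-- lifting a renaming under a binder -/
def liftR (f : ℕ → ℕ) : ℕ → ℕ
  | 0 => 0
  | k + 1 => f k + 1

/-- renaming of free variables -/
def rename (f : ℕ → ℕ) : Tm → Tm
  | var k => var (f k)
  | app t u => app (rename f t) (rename f u)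
  | lam t => lam (rename (liftR f) t)
  | bang t => bang (rename f t)
  | der t => der (rename f t)
  | esub t u => esub (rename (liftR f) t) (rename f u)

/-- lifting a simultaneous substitution under a binder -/
def liftS (σ : ℕ → Tm) : ℕ → Tm
  | 0 => var 0
  | k + 1 => rename (· + 1) (σ k)

/-- simultaneous (capture-avoiding) substitution -/
def subst (σ : ℕ → Tm) : Tm → Tm
  | var k => σ k
  | app t u => app (subst σ t) (subst σ u)
  | lam t => lam (subst (liftS σ) t)
  | bang t => bang (subst σ t)
  | der t => der (subst σ t)
  | esub t u => esub (subst (liftS σ) t) (subst σ u)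

/-- capture-avoiding substitution of `u` for the variable `0` of `t`,
where the result is placed under `n` extra binders (and `u` already lives
at that depth). -/
def substIn (n : ℕ) (u : Tm) (t : Tm) : Tm :=
  subst (fun k => match k with
    | 0 => u
    | k + 1 => var (k + n)) t

/-- capture-avoiding meta-level substitution `t{0 := u}` -/
def subst0 (u : Tm) (t : Tm) : Tm := substIn 0 u t

/-- plugging a term into a list context `L ::= ◻ | L[x\t]`; the head of the
list is the argument of the outermost explicit substitution. -/
def plug : List Tm → Tm → Tm
  | [], s => s
  | e :: L, s => esub (plug L s) e

/-- the w-size of a term -/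
def wsize : Tm → ℕ
  | var _ => 0
  | app t u => 1 + wsize t + wsize u
  | lam t => 1 + wsize t
  | bang _ => 0
  | der t => 1 + wsize t
  | esub t u => 1 + wsize t + wsize u

end Tm

/-- the names of the three rewriting rules of the λ!-calculus -/
inductive Rule : Type
  | dB | sb | db
  deriving DecidableEq

open Tm in
/-- the three rewriting rules, applied at the root (at a distance) -/
inductive Root : Rule → Tm → Tm → Prop
  | dB (L : List Tm) (t u : Tm) :
      Root .dB (app (plug L (lam t)) u)
               (plug L (esub t (rename (· + L.length) u)))
  | sb (L : List Tm) (t u : Tm) :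
      Root .sb (esub t (plug L (bang u))) (plug L (substIn L.length u t))
  | db (L : List Tm) (t : Tm) :
      Root .db (der (plug L (bang t))) (plug L t)

/-- closure of each rule under weak contexts (no reduction under `bang`) -/
inductive Step : Rule → Tm → Tm → Prop
  | root {r : Rule} {t t' : Tm} : Root r t t' → Step r t t'
  | appL {r t t'} (u : Tm) : Step r t t' → Step r (Tm.app t u) (Tm.app t' u)
  | appR {r u u'} (t : Tm) : Step r u u' → Step r (Tm.app t u) (Tm.app t u')
  | lam {r t t'} : Step r t t' → Step r (Tm.lam t) (Tm.lam t')
  | der {r t t'} : Step r t t' → Step r (Tm.der t) (Tm.der t')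
  | esubL {r t t'} (u : Tm) : Step r t t' → Step r (Tm.esub t u) (Tm.esub t' u)
  | esubR {r u u'} (t : Tm) : Step r u u' → Step r (Tm.esub t u) (Tm.esub t u')

/-- the weak reduction `→w` of the λ!-calculus -/
def StepW (t t' : Tm) : Prop := ∃ r, Step r t t'

/-- counted weak reduction: `RedCnt t (b, e) u` holds iff `t →w* u` using `b`
dB-steps and `e` steps of kind s!/d!. -/
inductive RedCnt : Tm → ℕ × ℕ → Tm → Prop
  | refl (t : Tm) : RedCnt t (0, 0) t
  | db {t t₁ u : Tm} {b e : ℕ} :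
      Step .dB t t₁ → RedCnt t₁ (b, e) u → RedCnt t (b + 1, e) u
  | ex {t t₁ u : Tm} {b e : ℕ} :
      (Step .sb t t₁ ∨ Step .db t t₁) → RedCnt t₁ (b, e) u →
      RedCnt t (b, e + 1) u

mutual
  /-- neutral w-normal terms -/
  inductive NeW : Tm → Prop
    | var (k : ℕ) : NeW (Tm.var k)
    | app {t u : Tm} : NaW t → NoW u → NeW (Tm.app t u)
    | der {t : Tm} : NbW t → NeW (Tm.der t)
    | esub {t u : Tm} : NeW t → NbW u → NeW (Tm.esub t u)
  /-- neutral-abs w-normal terms -/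
  inductive NaW : Tm → Prop
    | bang (t : Tm) : NaW (Tm.bang t)
    | ne {t : Tm} : NeW t → NaW t
    | esub {t u : Tm} : NaW t → NbW u → NaW (Tm.esub t u)
  /-- neutral-bang w-normal terms -/
  inductive NbW : Tm → Prop
    | ne {t : Tm} : NeW t → NbW t
    | lam {t : Tm} : NoW t → NbW (Tm.lam t)
    | esub {t u : Tm} : NbW t → NbW u → NbW (Tm.esub t u)
  /-- w-normal terms -/
  inductive NoW : Tm → Prop
    | na {t : Tm} : NaW t → NoW t
    | nb {t : Tm} : NbW t → NoW t
end

/-- clashes -/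
inductive Clash : Tm → Prop
  | appBang (L : List Tm) (t u : Tm) : Clash (Tm.app (Tm.plug L (Tm.bang t)) u)
  | esubLam (L : List Tm) (t u : Tm) : Clash (Tm.esub t (Tm.plug L (Tm.lam u)))
  | derLam (L : List Tm) (u : Tm) : Clash (Tm.der (Tm.plug L (Tm.lam u)))
  | appLam (L : List Tm) (t u : Tm) : Clash (Tm.app t (Tm.plug L (Tm.lam u)))

/-- `WSub t s` holds iff `t = W⟨s⟩` for some weak context `W` -/
inductive WSub : Tm → Tm → Prop
  | refl (t : Tm) : WSub t t
  | appL {t s : Tm} (u : Tm) : WSub t s → WSub (Tm.app t u) s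
  | appR {u s : Tm} (t : Tm) : WSub u s → WSub (Tm.app t u) s
  | lam {t s : Tm} : WSub t s → WSub (Tm.lam t) s
  | der {t s : Tm} : WSub t s → WSub (Tm.der t) s
  | esubL {t s : Tm} (u : Tm) : WSub t s → WSub (Tm.esub t u) s
  | esubR {u s : Tm} (t : Tm) : WSub u s → WSub (Tm.esub t u) s

/-- weak clash freeness -/
def Wcf (t : Tm) : Prop := ¬ ∃ s, WSub t s ∧ Clash s

mutual
  /-- neutral weak clash free normal terms -/
  inductive NeCF : Tm → Prop
    | var (k : ℕ) : NeCF (Tm.var k)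
    | app {t u : Tm} : NeCF t → NaCF u → NeCF (Tm.app t u)
    | der {t : Tm} : NeCF t → NeCF (Tm.der t)
    | esub {t u : Tm} : NeCF t → NeCF u → NeCF (Tm.esub t u)
  /-- neutral-abs weak clash free normal terms -/
  inductive NaCF : Tm → Prop
    | bang (t : Tm) : NaCF (Tm.bang t)
    | ne {t : Tm} : NeCF t → NaCF t
    | esub {t u : Tm} : NaCF t → NeCF u → NaCF (Tm.esub t u)
  /-- neutral-bang weak clash free normal terms -/
  inductive NbCF : Tm → Prop
    | ne {t : Tm} : NeCF t → NbCF t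
    | lam {t : Tm} : NoCF t → NbCF (Tm.lam t)
    | esub {t u : Tm} : NbCF t → NeCF u → NbCF (Tm.esub t u)
  /-- weak clash free normal terms -/
  inductive NoCF : Tm → Prop
    | na {t : Tm} : NaCF t → NoCF t
    | nb {t : Tm} : NbCF t → NoCF t
end

/-- Types of system 𝒰: base types, multiset types and arrow types.  A
multiset type is given by a list of types (a representative of the multiset
it determines). -/
inductive Ty : Type
  | base : ℕ → Ty
  | mult : List Ty → Ty
  | arr : List Ty → Ty → Ty

/-- typing contexts: functions from (de Bruijn) variables to multiset types -/
abbrev Ctx := ℕ → Multiset Ty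

/-- the context mapping `k` to `M` and anything else to the empty multiset -/
def Ctx.single (k : ℕ) (M : Multiset Ty) : Ctx := fun j => if j = k then M else 0

/-- removing the (type of the) bound variable `0` from a context -/
def Ctx.tail (Γ : Ctx) : Ctx := fun k => Γ (k + 1)

/-- extending a context with a multiset type for a fresh variable `0` -/
def Ctx.cons (M : Multiset Ty) (Γ : Ctx) : Ctx := fun k =>
  match k with
  | 0 => M
  | k + 1 => Γ k

/-- Sized typing of system 𝒰: `DerU Γ t τ n` means that there is a derivation
of `Γ ⊢ t : τ` whose size (number of rules, not counting `bg`) is `n`. -/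
inductive DerU : Ctx → Tm → Ty → ℕ → Prop
  | ax (k : ℕ) (σ : Ty) : DerU (Ctx.single k {σ}) (Tm.var k) σ 1
  | app {Γ Δ : Ctx} {t u : Tm} {M : List Ty} {τ : Ty} {n m : ℕ} :
      DerU Γ t (Ty.arr M τ) n → DerU Δ u (Ty.mult M) m →
      DerU (Γ + Δ) (Tm.app t u) τ (n + m + 1)
  | abs {Γ : Ctx} {t : Tm} {τ : Ty} {n : ℕ} (M : List Ty) :
      DerU Γ t τ n → Multiset.ofList M = Γ 0 →
      DerU (Ctx.tail Γ) (Tm.lam t) (Ty.arr M τ) (n + 1)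
  | es {Γ Δ : Ctx} {t u : Tm} {σ : Ty} {M : List Ty} {n m : ℕ} :
      DerU Γ t σ n → DerU Δ u (Ty.mult M) m → Multiset.ofList M = Γ 0 →
      DerU (Ctx.tail Γ + Δ) (Tm.esub t u) σ (n + m + 1)
  | bg {t : Tm} (prs : List (Ctx × Ty × ℕ)) :
      (∀ p ∈ prs, DerU p.1 t p.2.1 p.2.2) →
      DerU ((prs.map (·.1)).sum) (Tm.bang t)
           (Ty.mult (prs.map (·.2.1))) ((prs.map (·.2.2)).sum)
  | dr {Γ : Ctx} {t : Tm} {σ : Ty} {n : ℕ} :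
      DerU Γ t (Ty.mult [σ]) n → DerU Γ (Tm.der t) σ (n + 1)

/-! ## The source λ-calculus with explicit substitutions (CBN / CBV) -/

/-- terms of the λ-calculus with explicit substitutions (de Bruijn) -/
inductive Lm : Type
  | var : ℕ → Lm
  | app : Lm → Lm → Lm
  | lam : Lm → Lm
  | esub : Lm → Lm → Lm
  deriving DecidableEq

namespace Lm

def liftR (f : ℕ → ℕ) : ℕ → ℕ
  | 0 => 0
  | k + 1 => f k + 1

def rename (f : ℕ → ℕ) : Lm → Lm
  | var k => var (f k)
  | app t u => app (rename f t) (rename f u)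
  | lam t => lam (rename (liftR f) t)
  | esub t u => esub (rename (liftR f) t) (rename f u)

def liftS (σ : ℕ → Lm) : ℕ → Lm
  | 0 => var 0
  | k + 1 => rename (· + 1) (σ k)

def subst (σ : ℕ → Lm) : Lm → Lm
  | var k => σ k
  | app t u => app (subst σ t) (subst σ u)
  | lam t => lam (subst (liftS σ) t)
  | esub t u => esub (subst (liftS σ) t) (subst σ u)

def substIn (n : ℕ) (u : Lm) (t : Lm) : Lm :=
  subst (fun k => match k with
    | 0 => u
    | k + 1 => var (k + n)) t

/-- capture-avoiding meta-level substitution `t{0 := u}` -/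
def subst0 (u : Lm) (t : Lm) : Lm := substIn 0 u t

def plug : List Lm → Lm → Lm
  | [], s => s
  | e :: L, s => esub (plug L s) e

/-- values -/
def IsVal : Lm → Prop
  | var _ => True
  | lam _ => True
  | _ => False

/-- the n-size of a term -/
def nsize : Lm → ℕ
  | var _ => 0
  | lam t => 1 + nsize t
  | app t _ => 1 + nsize t
  | esub t _ => 1 + nsize t

/-- the v-size of a term -/
def vsize : Lm → ℕ
  | var _ => 0
  | lam _ => 0
  | app t u => 1 + vsize t + vsize u
  | esub t u => 1 + vsize t + vsize u

end Lm

/-- names of the CBN rules -/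
inductive NRule : Type
  | dB | s
  deriving DecidableEq

/-- call-by-name reduction (closure of dB and s under CBN contexts) -/
inductive StepN : NRule → Lm → Lm → Prop
  | dB (L : List Lm) (t u : Lm) :
      StepN .dB (Lm.app (Lm.plug L (Lm.lam t)) u)
                (Lm.plug L (Lm.esub t (Lm.rename (· + L.length) u)))
  | s (t u : Lm) : StepN .s (Lm.esub t u) (Lm.subst0 u t)
  | appL {r t t'} (u : Lm) : StepN r t t' → StepN r (Lm.app t u) (Lm.app t' u)
  | lam {r t t'} : StepN r t t' → StepN r (Lm.lam t) (Lm.lam t')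
  | esubL {r t t'} (u : Lm) : StepN r t t' → StepN r (Lm.esub t u) (Lm.esub t' u)

/-- names of the CBV rules -/
inductive VRule : Type
  | dB | sv
  deriving DecidableEq

/-- call-by-value reduction (closure of dB and sv under CBV contexts) -/
inductive StepV : VRule → Lm → Lm → Prop
  | dB (L : List Lm) (t u : Lm) :
      StepV .dB (Lm.app (Lm.plug L (Lm.lam t)) u)
                (Lm.plug L (Lm.esub t (Lm.rename (· + L.length) u)))
  | sv (L : List Lm) (t v : Lm) (hv : Lm.IsVal v) :
      StepV .sv (Lm.esub t (Lm.plug L v)) (Lm.plug L (Lm.substIn L.length v t))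
  | appL {r t t'} (u : Lm) : StepV r t t' → StepV r (Lm.app t u) (Lm.app t' u)
  | appR {r u u'} (t : Lm) : StepV r u u' → StepV r (Lm.app t u) (Lm.app t u')
  | esubL {r t t'} (u : Lm) : StepV r t t' → StepV r (Lm.esub t u) (Lm.esub t' u)
  | esubR {r u u'} (t : Lm) : StepV r u u' → StepV r (Lm.esub t u) (Lm.esub t u')

mutual
  /-- CBN neutral terms -/
  inductive NeN : Lm → Prop
    | var (k : ℕ) : NeN (Lm.var k)
    | app {t : Lm} (u : Lm) : NeN t → NeN (Lm.app t u)
  /-- CBN normal terms -/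
  inductive NoN : Lm → Prop
    | lam {t : Lm} : NoN t → NoN (Lm.lam t)
    | ne {t : Lm} : NeN t → NoN t
end

mutual
  /-- CBV (substituted) variables -/
  inductive VrV : Lm → Prop
    | var (k : ℕ) : VrV (Lm.var k)
    | esub {t u : Lm} : VrV t → NeV u → VrV (Lm.esub t u)
  /-- CBV neutral terms -/
  inductive NeV : Lm → Prop
    | app₁ {t u : Lm} : VrV t → NoV u → NeV (Lm.app t u)
    | app₂ {t u : Lm} : NeV t → NoV u → NeV (Lm.app t u)
    | esub {t u : Lm} : NeV t → NeV u → NeV (Lm.esub t u)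
  /-- CBV normal terms -/
  inductive NoV : Lm → Prop
    | lam (t : Lm) : NoV (Lm.lam t)
    | vr {t : Lm} : VrV t → NoV t
    | ne {t : Lm} : NeV t → NoV t
    | esub {t u : Lm} : NoV t → NeV u → NoV (Lm.esub t u)
end

/-- counted CBN reduction, recording the number of dB- and s-steps -/
inductive RedCntN : Lm → ℕ × ℕ → Lm → Prop
  | refl (t : Lm) : RedCntN t (0, 0) t
  | db {t t₁ u : Lm} {b e : ℕ} :
      StepN .dB t t₁ → RedCntN t₁ (b, e) u → RedCntN t (b + 1, e) u
  | s {t t₁ u : Lm} {b e : ℕ} :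
      StepN .s t t₁ → RedCntN t₁ (b, e) u → RedCntN t (b, e + 1) u

/-- counted CBV reduction, recording the number of dB- and sv-steps -/
inductive RedCntV : Lm → ℕ × ℕ → Lm → Prop
  | refl (t : Lm) : RedCntV t (0, 0) t
  | db {t t₁ u : Lm} {b e : ℕ} :
      StepV .dB t t₁ → RedCntV t₁ (b, e) u → RedCntV t (b + 1, e) u
  | sv {t t₁ u : Lm} {b e : ℕ} :
      StepV .sv t t₁ → RedCntV t₁ (b, e) u → RedCntV t (b, e + 1) u

/-- the CBN embedding into the λ!-calculus -/
def cbn : Lm → Tm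
  | .var k => .var k
  | .lam t => .lam (cbn t)
  | .app t u => .app (cbn t) (.bang (cbn u))
  | .esub t u => .esub (cbn t) (.bang (cbn u))

/-- `deBang t = some s'` iff `t = L⟨!s⟩` and `s' = L⟨s⟩` -/
def deBang : Tm → Option Tm
  | .bang s => some s
  | .esub t e => (deBang t).map (fun s => Tm.esub s e)
  | _ => none

/-- the CBV embedding into the λ!-calculus -/
def cbv : Lm → Tm
  | .var k => .bang (.var k)
  | .lam t => .bang (.lam (cbv t))
  | .app t u =>
      match deBang (cbv t) with
      | some r => Tm.app r (cbv u)
      | none => Tm.app (.der (cbv t)) (cbv u)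
  | .esub t u => .esub (cbv t) (cbv u)

/-- Sized typing of system 𝒩 (call-by-name): `DerN Γ t τ n` means that there
is a derivation of `Γ ⊢ t : τ` of size `n` (counting all rules). -/
inductive DerN : Ctx → Lm → Ty → ℕ → Prop
  | ax (k : ℕ) (σ : Ty) : DerN (Ctx.single k {σ}) (Lm.var k) σ 1
  | app {Γ : Ctx} {t u : Lm} {τ : Ty} {n : ℕ} (prs : List (Ctx × Ty × ℕ)) :
      DerN Γ t (Ty.arr (prs.map (·.2.1)) τ) n →
      (∀ p ∈ prs, DerN p.1 u p.2.1 p.2.2) →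
      DerN (Γ + (prs.map (·.1)).sum) (Lm.app t u) τ
           (n + (prs.map (·.2.2)).sum + 1)
  | abs {Γ : Ctx} {t : Lm} {τ : Ty} {n : ℕ} (M : List Ty) :
      DerN Γ t τ n → Multiset.ofList M = Γ 0 →
      DerN (Ctx.tail Γ) (Lm.lam t) (Ty.arr M τ) (n + 1)
  | es {Γ : Ctx} {t u : Lm} {τ : Ty} {n : ℕ} (prs : List (Ctx × Ty × ℕ)) :
      DerN Γ t τ n →
      Multiset.ofList (prs.map (·.2.1)) = Γ 0 →
      (∀ p ∈ prs, DerN p.1 u p.2.1 p.2.2) →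
      DerN (Ctx.tail Γ + (prs.map (·.1)).sum) (Lm.esub t u) τ
           (n + (prs.map (·.2.2)).sum + 1)

/-- Sized typing of system 𝒱 (call-by-value): `DerV Γ t τ n` means that there
is a derivation of `Γ ⊢ t : τ` of size `n` (each rule counts 1, except that
`ax` counts the cardinal of its multiset and `abs` contributes the sizes of
its premises plus the number of premises). -/
inductive DerV : Ctx → Lm → Ty → ℕ → Prop
  | ax (k : ℕ) (M : List Ty) :
      DerV (Ctx.single k (Multiset.ofList M)) (Lm.var k) (Ty.mult M) M.length
  | es {Γ Δ : Ctx} {t u : Lm} {σ : Ty} {M : List Ty} {n m : ℕ} :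
      DerV Γ t σ n → DerV Δ u (Ty.mult M) m → Multiset.ofList M = Γ 0 →
      DerV (Ctx.tail Γ + Δ) (Lm.esub t u) σ (n + m + 1)
  | abs {t : Lm} (prs : List (Ctx × List Ty × Ty × ℕ)) :
      (∀ p ∈ prs, DerV p.1 t p.2.2.1 p.2.2.2) →
      (∀ p ∈ prs, Multiset.ofList p.2.1 = p.1 0) →
      DerV ((prs.map (fun p => Ctx.tail p.1)).sum) (Lm.lam t)
           (Ty.mult (prs.map (fun p => Ty.arr p.2.1 p.2.2.1)))
           ((prs.map (·.2.2.2)).sum + prs.length)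
  | app {Γ Δ : Ctx} {t u : Lm} {M : List Ty} {τ : Ty} {n m : ℕ} :
      DerV Γ t (Ty.mult [Ty.arr M τ]) n → DerV Δ u (Ty.mult M) m →
      DerV (Γ + Δ) (Lm.app t u) τ (n + m + 1)

/-!
Fix a system and let `⟦t⟧ τ` be the set of pairs `(Γ, n)` such that `Γ ⊢ t : τ` has a derivation of
size `n`. Sets of such pairs form a commutative monoid under pointwise addition, and each typing
rule becomes an equation: for instance, in system N, `⟦t u⟧ τ` is the union over `M` of
`⟦t⟧ (M → τ) + ∑_{σ ∈ M} ⟦u⟧ σ + {(0, 1)}`. A relational substitution that sends each hypothesis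
`x : [τ]` to the derivations of `σ x` extends additively to contexts and commutes with all these
equations, so `⟦t{σ}⟧` is the image of `⟦t⟧` under it. If `v` may be substituted, it follows that
`⟦t[x\v]⟧` and `⟦t{x := v}⟧` contain the same contexts, the sizes in the latter being smaller by one
plus the number of axioms for `x`. Hence every step preserves the context and the type in both
directions and decreases the size; as normal forms are typable, both characterisations follow, and
counting the decreases gives the quantitative bounds.
-/

namespace Ctx

variable (M N : Multiset Ty) (Γ Δ : Ctx)

@[simp]
theorem cons_apply_zero : cons M Γ 0 = M := rfl

@[simp]
theorem tail_cons : tail (cons M Γ) = Γ := rfl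

@[simp]
theorem tail_add : tail (Γ + Δ) = tail Γ + tail Δ := rfl

theorem eq_iff_head_tail {Γ Δ : Ctx} : Γ = Δ ↔ Γ 0 = Δ 0 ∧ tail Γ = tail Δ := by
  constructor
  · rintro rfl
    exact ⟨rfl, rfl⟩
  · rintro ⟨hhead, htail⟩
    funext k
    cases k with
    | zero => exact hhead
    | succ k => exact congrFun htail k

@[simp]
theorem cons_head_tail : cons (Γ 0) (tail Γ) = Γ := eq_iff_head_tail.2 ⟨rfl, rfl⟩

@[simp]
theorem single_apply_self (k : ℕ) : single k M k = M := if_pos rfl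

@[simp]
theorem single_succ_apply_zero (k : ℕ) : single (k + 1) M 0 = 0 := rfl

@[simp]
theorem tail_single_zero : tail (single 0 M) = 0 := rfl

@[simp]
theorem tail_single_succ (k : ℕ) : tail (single (k + 1) M) = single k M := by
  funext j
  simp [tail, single]

@[simp]
theorem cons_zero_single (k : ℕ) : cons 0 (single k M) = single (k + 1) M := by
  simp [eq_iff_head_tail]

@[simp]
theorem single_zero (k : ℕ) : single k 0 = 0 := by
  funext j
  simp [single]

theorem single_add (k : ℕ) : single k (M + N) = single k M + single k N := by
  funext j
  by_cases h : j = k <;> simp [single, h]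

/-- `Ctx.single` as a homomorphism in the multiset. -/
def singleHom (k : ℕ) : Multiset Ty →+ Ctx where
  toFun := single k
  map_zero' := single_zero k
  map_add' M N := single_add M N k

/-- `Ctx.tail` as a homomorphism. -/
def tailHom : Ctx →+ Ctx where
  toFun := tail
  map_zero' := rfl
  map_add' _ _ := rfl

/-- Weakening by a fresh variable `0`, as a homomorphism. -/
def shiftHom : Ctx →+ Ctx where
  toFun := cons 0
  map_zero' := by funext k; cases k <;> rfl
  map_add' Γ Δ := by funext k; cases k <;> rfl

end Ctx

/-- A typing context together with the size of a derivation. -/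
abbrev WCtx := Ctx × ℕ

namespace WCtx

open scoped Pointwise

/-- The contribution of one rule to the size of a derivation. -/
def tick : Set WCtx := {(0, 1)}

/-- The conclusions, with the bound variable `0` removed, of the judgements of `A` that give it the
multiset `M`. -/
def pop (M : Multiset Ty) (A : Set WCtx) : Set WCtx := {w | (Ctx.cons M w.1, w.2) ∈ A}

/-- The sums of one judgement in `P τ` for each occurrence of `τ` in a multiset: this interprets
the rules with a family of premises. -/
def bag (P : Ty → Set WCtx) : Multiset Ty →+ Set WCtx :=
  Multiset.sumAddMonoidHom.comp (Multiset.mapAddMonoidHom P)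

/-- The image of a set of judgements under a relation that replaces a context `Γ` by any `Δ` at the
additional cost `m`, for `(Δ, m) ∈ R Γ`. -/
def transport (R : Ctx →+ Set WCtx) : Set WCtx →+ Set WCtx where
  toFun A := ⋃ w ∈ A, R w.1 + {(0, w.2)}
  map_zero' := by
    rw [← Set.singleton_zero, Set.biUnion_singleton, Prod.fst_zero, map_zero]
    exact add_zero 0
  map_add' A B := by
    have key (a b : WCtx) : R (a + b).1 + {(0, (a + b).2)} =
        (R a.1 + {(0, a.2)}) + (R b.1 + {(0, b.2)}) := by
      rw [Prod.fst_add, Prod.snd_add, map_add, add_add_add_comm, Set.singleton_add_singleton,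
        Prod.mk_add_mk, add_zero]
    have union_add : ⋃ w ∈ A + B, R w.1 + {(0, w.2)} =
        ⋃ a ∈ A, ⋃ b ∈ B, R (a + b).1 + {(0, (a + b).2)} :=
      Set.biUnion_image2 A B (· + ·) fun w => R w.1 + {(0, w.2)}
    rw [union_add, Set.iUnion₂_add]
    simp only [Set.add_iUnion₂, key]

theorem mem_transport {R : Ctx →+ Set WCtx} {A : Set WCtx} {Δ : Ctx} {n : ℕ} :
    (Δ, n) ∈ transport R A ↔ ∃ Γ k m, (Γ, k) ∈ A ∧ (Δ, m) ∈ R Γ ∧ m + k = n := by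
  simp [transport, Set.mem_iUnion]

section Bag

variable (P Q : Ty → Set WCtx)

@[simp]
theorem bag_singleton (τ : Ty) : bag P {τ} = P τ := by simp [bag]

theorem bag_add_fun (M : Multiset Ty) : bag (fun τ => P τ + Q τ) M = bag P M + bag Q M :=
  Multiset.sum_map_add

theorem bag_hom_singleton (F : Multiset Ty →+ Set WCtx) : bag (fun τ => F {τ}) = F :=
  Multiset.addHom_ext fun τ => bag_singleton _ τ

theorem bag_tick (M : Multiset Ty) : bag (fun _ => tick) M = {(0, M.card)} :=
  DFunLike.congr_fun (bag_hom_singleton (Set.singletonAddMonoidHom.comp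
    ((AddMonoidHom.inr Ctx ℕ).comp Multiset.cardHom))) M

theorem mem_bag_coe_iff_exists_list {P : Ty → Set WCtx} {ι : Type} {valid : ι → Prop}
    {type : ι → Ty} {weight : ι → WCtx}
    (hP : ∀ τ w, w ∈ P τ ↔ ∃ i, valid i ∧ type i = τ ∧ weight i = w) {M : List Ty} {w : WCtx} :
    w ∈ bag P M ↔
      ∃ l : List ι, (∀ i ∈ l, valid i) ∧ l.map type = M ∧ (l.map weight).sum = w := by
  induction M generalizing w with
  | nil =>
    rw [Multiset.coe_nil, map_zero, ← Set.singleton_zero, Set.mem_singleton_iff]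
    simp [List.map_eq_nil_iff, eq_comm]
  | cons τ M ih =>
    rw [← Multiset.cons_coe, ← Multiset.singleton_add, map_add, bag_singleton, Set.mem_add]
    constructor
    · rintro ⟨a, ha, b, hb, rfl⟩
      obtain ⟨i, hi, rfl, rfl⟩ := (hP τ a).1 ha
      obtain ⟨l, hl, rfl, rfl⟩ := ih.1 hb
      exact ⟨i :: l, List.forall_mem_cons.2 ⟨hi, hl⟩, rfl, rfl⟩
    · rintro ⟨l, hl, hM, rfl⟩
      obtain ⟨i, l, rfl, rfl, rfl⟩ := List.map_eq_cons_iff.1 hM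
      obtain ⟨hi, hl⟩ := List.forall_mem_cons.1 hl
      exact ⟨weight i, (hP _ _).2 ⟨i, hi, rfl, rfl⟩, _, ih.2 ⟨l, hl, rfl, rfl⟩, rfl⟩

theorem sum_map_pair {ι : Type} (l : List ι) (f : ι → Ctx) (g : ι → ℕ) :
    (l.map fun i => ((f i, g i) : WCtx)).sum = ((l.map f).sum, (l.map g).sum) := by
  induction l with
  | nil => rfl
  | cons i l ih => simp [ih]

theorem mem_bag_coe {P : Ty → Set WCtx} {M : List Ty} {Γ : Ctx} {n : ℕ} :
    (Γ, n) ∈ bag P M ↔ ∃ prs : List (Ctx × Ty × ℕ), (∀ p ∈ prs, (p.1, p.2.2) ∈ P p.2.1) ∧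
      prs.map (·.2.1) = M ∧ (prs.map (·.1)).sum = Γ ∧ (prs.map (·.2.2)).sum = n := by
  rw [mem_bag_coe_iff_exists_list (valid := fun p : Ctx × Ty × ℕ => (p.1, p.2.2) ∈ P p.2.1)
    (type := (·.2.1)) (weight := fun p => (p.1, p.2.2))]
  · simp only [sum_map_pair, Prod.mk.injEq]
  · intro τ w
    constructor
    · exact fun hw => ⟨(w.1, τ, w.2), hw, rfl, rfl⟩
    · rintro ⟨p, hp, rfl, rfl⟩
      exact hp

end Bag

section Transport

variable (R : Ctx →+ Set WCtx)

@[simp]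
theorem transport_singleton (Γ : Ctx) (n : ℕ) :
    transport R {(Γ, n)} = R Γ + {(0, n)} :=
  Set.biUnion_singleton (Γ, n) fun w => R w.1 + {(0, w.2)}

@[simp]
theorem transport_tick : transport R tick = tick := by
  rw [tick, transport_singleton, map_zero, zero_add]

theorem transport_iUnion {ι : Sort*} (A : ι → Set WCtx) :
    transport R (⋃ i, A i) = ⋃ i, transport R (A i) :=
  Set.biUnion_iUnion A fun w => R w.1 + {(0, w.2)}

theorem transport_bag (P : Ty → Set WCtx) (M : Multiset Ty) :
    transport R (bag P M) = bag (fun τ => transport R (P τ)) M := by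
  simpa only [AddMonoidHom.comp_apply, bag_singleton] using
    (DFunLike.congr_fun (bag_hom_singleton ((transport R).comp (bag P))) M).symm

/-- The relation `Γ ↦ {(cons 0 Γ, 0)}` that weakens a judgement by a fresh variable `0`. -/
def shiftRel : Ctx →+ Set WCtx :=
  Set.singletonAddMonoidHom.comp ((AddMonoidHom.inl Ctx ℕ).comp Ctx.shiftHom)

@[simp]
theorem shiftRel_apply (Γ : Ctx) : shiftRel Γ = {(Ctx.cons 0 Γ, 0)} := rfl

/-- The extension of a relation on contexts that keeps the variable `0` unchanged. -/
def liftRel : Ctx →+ Set WCtx :=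
  Set.singletonAddMonoidHom.comp
      ((AddMonoidHom.inl Ctx ℕ).comp
        ((Ctx.singleHom 0).comp (Pi.evalAddMonoidHom (fun _ => Multiset Ty) 0))) +
    (transport shiftRel).comp (R.comp Ctx.tailHom)

theorem liftRel_apply (Γ : Ctx) :
    liftRel R Γ = {(Ctx.single 0 (Γ 0), 0)} + transport shiftRel (R (Ctx.tail Γ)) := rfl

end Transport

section Pop

variable (M : Multiset Ty)

theorem mem_pop {M : Multiset Ty} {A : Set WCtx} {Γ : Ctx} {n : ℕ} :
    (Γ, n) ∈ pop M A ↔ (Ctx.cons M Γ, n) ∈ A := Iff.rfl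

theorem pop_iUnion {ι : Sort*} (A : ι → Set WCtx) : pop M (⋃ i, A i) = ⋃ i, pop M (A i) :=
  Set.preimage_iUnion

theorem mem_transport_shiftRel {A : Set WCtx} {Γ : Ctx} {n : ℕ} :
    (Γ, n) ∈ transport shiftRel A ↔ Γ 0 = 0 ∧ (Ctx.tail Γ, n) ∈ A := by
  rw [mem_transport]
  constructor
  · rintro ⟨Δ, k, m, hA, ⟨⟩, rfl⟩
    exact ⟨rfl, (zero_add k).symm ▸ hA⟩
  · rintro ⟨hΓ, hA⟩
    exact ⟨Ctx.tail Γ, n, 0, hA, by simp [← hΓ], zero_add n⟩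

theorem mem_liftRel {R : Ctx →+ Set WCtx} {Γ Δ : Ctx} {n : ℕ} :
    (Δ, n) ∈ liftRel R Γ ↔ Δ 0 = Γ 0 ∧ (Ctx.tail Δ, n) ∈ R (Ctx.tail Γ) := by
  rw [liftRel_apply, Set.singleton_add, Set.mem_image]
  constructor
  · rintro ⟨⟨Θ, m⟩, hΘ, ⟨⟩⟩
    obtain ⟨hΘ₀, hΘ⟩ := mem_transport_shiftRel.1 hΘ
    simpa [hΘ₀] using hΘ
  · rintro ⟨h₀, h⟩
    refine ⟨(Ctx.cons 0 (Ctx.tail Δ), n), mem_transport_shiftRel.2 ⟨rfl, h⟩, ?_⟩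
    simp [Ctx.eq_iff_head_tail, h₀]

theorem pop_transport_liftRel (R : Ctx →+ Set WCtx) (A : Set WCtx) :
    pop M (transport (liftRel R) A) = transport R (pop M A) := by
  ext ⟨Δ, n⟩
  simp only [mem_pop, mem_transport, mem_liftRel]
  constructor
  · rintro ⟨Γ, k, m, hA, ⟨rfl, hR⟩, rfl⟩
    exact ⟨Ctx.tail Γ, k, m, by simpa using hA, hR, rfl⟩
  · rintro ⟨Γ, k, m, hA, hR, rfl⟩
    exact ⟨Ctx.cons M Γ, k, m, hA, ⟨rfl, hR⟩, rfl⟩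

theorem pop_add_transport_shiftRel (A B : Set WCtx) :
    pop M (A + transport shiftRel B) = pop M A + B := by
  ext ⟨Δ, n⟩
  simp only [mem_pop, Set.mem_add]
  constructor
  · rintro ⟨⟨Γ, k⟩, hA, ⟨Θ, m⟩, hB, h⟩
    obtain ⟨hΘ₀, hΘ⟩ := mem_transport_shiftRel.1 hB
    obtain ⟨hctx, rfl⟩ := Prod.mk.inj h
    obtain ⟨hM, htail⟩ := Ctx.eq_iff_head_tail.1 hctx
    obtain rfl : Γ 0 = M := by simpa [hΘ₀] using hM
    obtain rfl : Ctx.tail Γ + Ctx.tail Θ = Δ := htail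
    exact ⟨(Ctx.tail Γ, k), by simpa [mem_pop] using hA, (Ctx.tail Θ, m), hΘ, rfl⟩
  · rintro ⟨⟨Γ, k⟩, hA, ⟨Θ, m⟩, hB, ⟨⟩⟩
    refine ⟨(Ctx.cons M Γ, k), hA, (Ctx.cons 0 Θ, m), mem_transport_shiftRel.2 ⟨rfl, hB⟩, ?_⟩
    simp [Ctx.eq_iff_head_tail]

theorem pop_add_tick (A : Set WCtx) : pop M (A + tick) = pop M A + tick := by
  conv_lhs => rw [← transport_tick shiftRel]
  exact pop_add_transport_shiftRel M A tick

end Pop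

section Subst

variable (P : Ty → Set WCtx)

/-- The relation that replaces the multiset `M` of the variable `0` by an element of `bag P M`. -/
def substRel : Ctx →+ Set WCtx :=
  (bag P).comp (Pi.evalAddMonoidHom (fun _ => Multiset Ty) 0) +
    Set.singletonAddMonoidHom.comp ((AddMonoidHom.inl Ctx ℕ).comp Ctx.tailHom)

theorem substRel_apply (Γ : Ctx) :
    substRel P Γ = bag P (Γ 0) + {(Ctx.tail Γ, 0)} := rfl

theorem transport_substRel (A : Set WCtx) :
    transport (substRel P) A = ⋃ M : List Ty, pop M A + bag P M := by
  ext ⟨Δ, n⟩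
  simp only [mem_transport, substRel_apply, Set.mem_iUnion, Set.add_singleton, Set.mem_image]
  constructor
  · rintro ⟨Γ, k, m, hA, ⟨⟨Θ, l⟩, hP, ⟨⟩⟩, rfl⟩
    refine ⟨(Γ 0).toList, (Ctx.tail Γ, k), ?_, (Θ, l), ?_, ?_⟩
    · simpa [mem_pop] using hA
    · rwa [Multiset.coe_toList]
    · simp [add_comm]
  · rintro ⟨M, ⟨Γ, k⟩, hA, ⟨Θ, l⟩, hP, ⟨⟩⟩
    exact ⟨Ctx.cons M Γ, k, l, hA, ⟨(Θ, l), hP, by simp [add_comm]⟩, add_comm l k⟩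

end Subst

end WCtx

namespace WCtx

open scoped Pointwise

/-- `A` and `B` contain the same contexts, and every judgement of `A` has a strictly smaller
counterpart in `B`. -/
structure Dominates (A B : Set WCtx) : Prop where
  exists_lt {Γ : Ctx} {n : ℕ} : (Γ, n) ∈ A → ∃ m < n, (Γ, m) ∈ B
  exists_mem {Γ : Ctx} {n : ℕ} : (Γ, n) ∈ B → ∃ m, (Γ, m) ∈ A

namespace Dominates

variable {A B : Set WCtx}

theorem add_right (h : Dominates A B) (C : Set WCtx) : Dominates (A + C) (B + C) where
  exists_lt := by
    rintro _ _ ⟨⟨Γ, n⟩, hA, ⟨Δ, k⟩, hC, ⟨⟩⟩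
    obtain ⟨m, hlt, hB⟩ := h.exists_lt hA
    exact ⟨m + k, Nat.add_lt_add_right hlt k, (Γ, m), hB, (Δ, k), hC, rfl⟩
  exists_mem := by
    rintro _ _ ⟨⟨Γ, n⟩, hB, ⟨Δ, k⟩, hC, ⟨⟩⟩
    obtain ⟨m, hA⟩ := h.exists_mem hB
    exact ⟨m + k, (Γ, m), hA, (Δ, k), hC, rfl⟩

theorem add_left (h : Dominates A B) (C : Set WCtx) : Dominates (C + A) (C + B) := by
  simpa only [add_comm C] using h.add_right C

theorem iUnion {ι : Sort*} {A B : ι → Set WCtx} (h : ∀ i, Dominates (A i) (B i)) :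
    Dominates (⋃ i, A i) (⋃ i, B i) where
  exists_lt hA := by
    obtain ⟨i, hi⟩ := Set.mem_iUnion.1 hA
    obtain ⟨m, hlt, hB⟩ := (h i).exists_lt hi
    exact ⟨m, hlt, Set.mem_iUnion_of_mem i hB⟩
  exists_mem hB := by
    obtain ⟨i, hi⟩ := Set.mem_iUnion.1 hB
    obtain ⟨m, hA⟩ := (h i).exists_mem hi
    exact ⟨m, Set.mem_iUnion_of_mem i hA⟩

theorem pop (h : Dominates A B) (M : Multiset Ty) : Dominates (pop M A) (pop M B) where
  exists_lt := h.exists_lt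
  exists_mem := h.exists_mem

theorem add_size (A : Set WCtx) (k : ℕ) : Dominates (A + {(0, k + 1)}) A where
  exists_lt := by
    rintro _ _ ⟨⟨Γ, n⟩, hA, _, rfl, ⟨⟩⟩
    exact ⟨n, by dsimp only; omega, by rwa [add_zero]⟩
  exists_mem {Γ n} hA := ⟨n + (k + 1), (Γ, n), hA, (0, k + 1), rfl, by simp⟩

end Dominates

/-- The judgements for an abstraction whose body has the judgements `P`. -/
def abs (P : Ty → Set WCtx) : Ty → Set WCtx
  | .arr M τ => pop M (P τ) + tick
  | _ => ∅

theorem transport_abs (R : Ctx →+ Set WCtx) (P : Ty → Set WCtx) (τ : Ty) :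
    transport R (abs P τ) = abs (fun σ => transport (liftRel R) (P σ)) τ := by
  have transport_empty : transport R ∅ = ∅ := Set.biUnion_empty _
  cases τ <;> simp only [abs, transport_empty, map_add, transport_tick, pop_transport_liftRel]

theorem Dominates.abs {P Q : Ty → Set WCtx} (h : ∀ τ, Dominates (P τ) (Q τ)) (τ : Ty) :
    Dominates (abs P τ) (abs Q τ) := by
  cases τ with
  | arr M τ => exact ((h τ).pop M).add_right tick
  | base | mult => exact ⟨fun h => h.elim, fun h => h.elim⟩

theorem exists_eq_add_tick {A : Set WCtx} (hA : ∀ w ∈ A, 1 ≤ w.2) : ∃ B, A = B + tick := by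
  refine ⟨{w | (w.1, w.2 + 1) ∈ A}, Set.ext fun ⟨Γ, n⟩ => ?_⟩
  rw [tick, Set.add_singleton, Set.mem_image]
  constructor
  · intro h
    obtain ⟨k, rfl⟩ := Nat.exists_eq_add_of_le' (hA _ h)
    exact ⟨(Γ, k), h, by simp⟩
  · rintro ⟨⟨Δ, k⟩, h, ⟨⟩⟩
    simpa using h

end WCtx

namespace Lm

theorem liftS_var_comp (f : ℕ → ℕ) : liftS (fun k => var (f k)) = fun k => var (liftR f k) := by
  funext k
  cases k <;> rfl

theorem rename_eq_subst (f : ℕ → ℕ) (t : Lm) : rename f t = subst (fun k => var (f k)) t := by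
  induction t generalizing f <;> simp_all only [subst, rename, liftS_var_comp]

theorem liftS_comp_liftR (σ : ℕ → Lm) (f : ℕ → ℕ) :
    (fun k => liftS σ (liftR f k)) = liftS (fun k => σ (f k)) := by
  funext k
  cases k <;> rfl

theorem subst_rename (σ : ℕ → Lm) (f : ℕ → ℕ) (t : Lm) :
    subst σ (rename f t) = subst (fun k => σ (f k)) t := by
  induction t generalizing f σ <;> simp_all only [subst, rename, liftS_comp_liftR]

theorem rename_rename (f g : ℕ → ℕ) (t : Lm) :
    rename f (rename g t) = rename (fun k => f (g k)) t := by
  rw [rename_eq_subst f, subst_rename, rename_eq_subst]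

theorem liftR_id : liftR (fun k => k) = fun k => k := by
  funext k
  cases k <;> rfl

theorem rename_id (t : Lm) : rename (fun k => k) t = t := by
  induction t <;> simp_all only [rename, liftR_id]

theorem substIn_succ (n : ℕ) (v t : Lm) :
    substIn (n + 1) v t = substIn n v (rename (liftR (· + 1)) t) := by
  rw [substIn, substIn, subst_rename]
  congr 1
  funext k
  cases k with
  | zero => rfl
  | succ k => exact congrArg var (Nat.succ_add_eq_add_succ k n).symm

theorem IsVal.rename {v : Lm} (h : IsVal v) (f : ℕ → ℕ) : IsVal (rename f v) := by
  cases v <;> exact h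

end Lm

open scoped Pointwise in
/-- A type system presented by the judgements `den t τ` of each term at each type. The axioms cover
what call-by-name and call-by-value have in common. -/
structure TypingSystem where
  den : Lm → Ty → Set WCtx
  /-- The type of a term used once at type `τ`: `τ` itself in system N, `[τ]` in system V. -/
  lin : Ty → Ty
  /-- The types at which an argument is typed to be passed to a function of domain `M`: those of `M`
  in system N, the single type `M` in system V. -/
  args : List Ty → List Ty
  /-- The multisets of linear types into which a type of a value decomposes. -/
  parts : Ty → Set (List Ty)
  /-- The terms that may be substituted: all terms in system N, the values in system V. -/
  values : Set Lm
  den_app (t u : Lm) (τ : Ty) : den (.app t u) τ =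
    ⋃ M, den t (lin (.arr M τ)) + WCtx.bag (den u) (args M) + WCtx.tick
  den_esub (t u : Lm) (τ : Ty) : den (.esub t u) τ =
    ⋃ M : List Ty, WCtx.pop M (den t τ) + WCtx.bag (den u) (args M) + WCtx.tick
  den_var (k : ℕ) (τ : Ty) : den (.var k) (lin τ) = {(Ctx.single k {τ}, 1)}
  den_lam (t : Lm) (τ : Ty) : den (.lam t) (lin τ) = WCtx.abs (den t) τ
  den_value {v : Lm} : v ∈ values → ∀ τ,
    den v τ = ⋃ M ∈ parts τ, WCtx.bag (fun σ => den v (lin σ)) (M : List Ty)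
  bag_value {v : Lm} : v ∈ values → ∀ M,
    WCtx.bag (den v) (args M) = WCtx.bag (fun σ => den v (lin σ)) M
  one_le_of_mem {v : Lm} : v ∈ values → ∀ {τ w}, w ∈ den v (lin τ) → 1 ≤ w.2
  var_mem_values (k : ℕ) : .var k ∈ values
  lam_mem_values (t : Lm) : .lam t ∈ values
  rename_mem_values {v : Lm} : v ∈ values → v.rename (· + 1) ∈ values

namespace TypingSystem

open Lm WCtx
open scoped Pointwise

variable (S : TypingSystem)

/-- `R` describes, up to the axiom it replaces, the typings of the terms substituted by `σ`. -/
def Interprets (R : Ctx →+ Set WCtx) (σ : ℕ → Lm) : Prop :=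
  ∀ k τ, S.den (σ k) (S.lin τ) = R (Ctx.single k {τ}) + tick

/-- A class of values containing the variables on which weakening acts as expected, so that
substitutions with values in it can be lifted under binders. -/
structure Liftable (C : Set Lm) : Prop where
  subset_values : C ⊆ S.values
  var_mem (k : ℕ) : .var k ∈ C
  rename_mem {u : Lm} : u ∈ C → u.rename (· + 1) ∈ C
  den_rename {u : Lm} : u ∈ C → ∀ τ,
    S.den (u.rename (· + 1)) (S.lin τ) = transport shiftRel (S.den u (S.lin τ))

variable {S} {C : Set Lm} {σ : ℕ → Lm} {R : Ctx →+ Set WCtx}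

theorem Liftable.liftS_mem (hC : S.Liftable C) (hσ : ∀ k, σ k ∈ C) : ∀ k, liftS σ k ∈ C
  | 0 => hC.var_mem 0
  | k + 1 => hC.rename_mem (hσ k)

theorem Interprets.liftS (hC : S.Liftable C) (hσ : ∀ k, σ k ∈ C) (hR : S.Interprets R σ) :
    S.Interprets (liftRel R) (liftS σ)
  | 0, τ => by
    simp [Lm.liftS, S.den_var, liftRel_apply, tick]
  | k + 1, τ => by
    rw [Lm.liftS, hC.den_rename (hσ k), hR k, map_add, transport_tick, liftRel_apply,
      Ctx.tail_single_succ, Ctx.single_succ_apply_zero, Ctx.single_zero, Prod.mk_zero_zero,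
      Set.singleton_zero, zero_add]

theorem den_value_eq_transport {v w : Lm} (hv : v ∈ S.values) (hw : w ∈ S.values)
    (h : ∀ τ, S.den w (S.lin τ) = transport R (S.den v (S.lin τ))) (τ : Ty) :
    S.den w τ = transport R (S.den v τ) := by
  rw [S.den_value hw, S.den_value hv]
  simp only [h, transport_iUnion, transport_bag]

theorem den_subst (hC : S.Liftable C) (hσ : ∀ k, σ k ∈ C) (hR : S.Interprets R σ) (t : Lm)
    (τ : Ty) : S.den (subst σ t) τ = transport R (S.den t τ) := by
  induction t generalizing σ R τ with
  | var k =>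
    refine den_value_eq_transport (S.var_mem_values k) (hC.subset_values (hσ k)) (fun τ => ?_) τ
    rw [hR k τ, S.den_var, transport_singleton, tick]
  | app t u iht ihu =>
    simp only [subst, S.den_app, iht hσ hR, funext (ihu hσ hR), transport_iUnion, map_add,
      transport_bag, transport_tick]
  | lam t iht =>
    refine den_value_eq_transport (S.lam_mem_values t) (S.lam_mem_values _) (fun τ => ?_) τ
    rw [S.den_lam, S.den_lam, transport_abs, funext (iht (hC.liftS_mem hσ) (hR.liftS hC hσ))]
  | esub t u iht ihu =>
    simp only [subst, S.den_esub, iht (hC.liftS_mem hσ) (hR.liftS hC hσ), funext (ihu hσ hR),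
      transport_iUnion, map_add, transport_bag, transport_tick, pop_transport_liftRel]

theorem liftable_range_var : S.Liftable (Set.range var) where
  subset_values := by
    rintro _ ⟨k, rfl⟩
    exact S.var_mem_values k
  var_mem := Set.mem_range_self
  rename_mem := by
    rintro _ ⟨k, rfl⟩
    exact ⟨k + 1, rfl⟩
  den_rename := by
    rintro _ ⟨k, rfl⟩ τ
    simp [rename, S.den_var]

theorem den_rename {f : ℕ → ℕ} (hR : S.Interprets R fun k => var (f k)) (t : Lm) (τ : Ty) :
    S.den (rename f t) τ = transport R (S.den t τ) := by
  rw [rename_eq_subst]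
  exact den_subst liftable_range_var (fun k => ⟨f k, rfl⟩) hR t τ

theorem interprets_shiftRel : S.Interprets shiftRel fun k => var (k + 1) := fun k τ => by
  simp [S.den_var, tick]

theorem den_rename_succ (t : Lm) (τ : Ty) :
    S.den (rename (· + 1) t) τ = transport shiftRel (S.den t τ) :=
  den_rename interprets_shiftRel t τ

theorem den_rename_liftR_succ (t : Lm) (τ : Ty) :
    S.den (rename (liftR (· + 1)) t) τ = transport (liftRel shiftRel) (S.den t τ) := by
  refine den_rename ?_ t τ
  rw [← liftS_var_comp]
  exact interprets_shiftRel.liftS liftable_range_var fun k => ⟨k + 1, rfl⟩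

theorem liftable_values : S.Liftable S.values where
  subset_values := subset_rfl
  var_mem := S.var_mem_values
  rename_mem := S.rename_mem_values
  den_rename _ _ := den_rename_succ _ _

theorem interprets_substRel {v : Lm} {P : Ty → Set WCtx}
    (hP : ∀ τ, S.den v (S.lin τ) = P τ + tick) :
    S.Interprets (substRel P) fun | 0 => v | k + 1 => var k
  | 0, τ => by
    rw [hP, substRel_apply, Ctx.single_apply_self, bag_singleton, Ctx.tail_single_zero,
      Prod.mk_zero_zero, Set.singleton_zero, add_zero]
  | k + 1, τ => by
    simp [S.den_var, substRel_apply, tick]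

theorem dominates_esub_subst0 {v : Lm} (hv : v ∈ S.values) (t : Lm) (τ : Ty) :
    Dominates (S.den (.esub t v) τ) (S.den (subst0 v t) τ) := by
  have exists_excess (τ : Ty) : ∃ A, S.den v (S.lin τ) = A + tick :=
    exists_eq_add_tick fun _ => S.one_le_of_mem hv
  choose P hP using exists_excess
  have hmem : ∀ k, (fun | 0 => v | k + 1 => var k : ℕ → Lm) k ∈ S.values
    | 0 => hv
    | k + 1 => S.var_mem_values k
  have den_subst0 : S.den (subst0 v t) τ = ⋃ M : List Ty, pop M (S.den t τ) + bag P M := by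
    rw [← transport_substRel]
    exact den_subst liftable_values hmem (interprets_substRel hP) t τ
  rw [den_subst0, S.den_esub]
  refine Dominates.iUnion fun M => ?_
  rw [S.bag_value hv, funext hP, bag_add_fun, bag_tick, tick, add_assoc, add_assoc,
    Set.singleton_add_singleton, Prod.mk_add_mk, add_zero, ← add_assoc]
  exact Dominates.add_size _ _

theorem dominates_app_left {t t' : Lm} (h : ∀ τ, Dominates (S.den t τ) (S.den t' τ)) (u : Lm)
    (τ : Ty) : Dominates (S.den (.app t u) τ) (S.den (.app t' u) τ) := by
  rw [S.den_app, S.den_app]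
  exact Dominates.iUnion fun M => ((h _).add_right _).add_right _

theorem dominates_esub_left {t t' : Lm} (h : ∀ τ, Dominates (S.den t τ) (S.den t' τ)) (u : Lm)
    (τ : Ty) : Dominates (S.den (.esub t u) τ) (S.den (.esub t' u) τ) := by
  rw [S.den_esub, S.den_esub]
  exact Dominates.iUnion fun M => (((h _).pop M).add_right _).add_right _

theorem den_app_esub (s e u : Lm) (τ : Ty) :
    S.den (.app (.esub s e) u) τ = S.den (.esub (.app s (rename (· + 1) u)) e) τ := by
  simp only [S.den_app, S.den_esub, funext (den_rename_succ u), ← transport_bag, pop_iUnion,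
    pop_add_tick, pop_add_transport_shiftRel, Set.iUnion_add]
  rw [Set.iUnion_comm]
  simp only [add_comm, add_left_comm]

theorem den_app_lam (t u : Lm) (τ : Ty) :
    S.den (.app (.lam t) u) τ = S.den (.esub t u) τ + tick := by
  simp only [S.den_app, S.den_esub, S.den_lam, WCtx.abs, Set.iUnion_add]
  simp only [add_right_comm]

theorem dominates_dB (L : List Lm) (t u : Lm) (τ : Ty) :
    Dominates (S.den (.app (plug L (.lam t)) u) τ)
      (S.den (plug L (.esub t (rename (· + L.length) u))) τ) := by
  induction L generalizing u τ with
  | nil =>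
    simp only [plug, List.length_nil, add_zero, rename_id, den_app_lam]
    exact Dominates.add_size _ 0
  | cons e L ih =>
    have hu : rename (· + (e :: L).length) u = rename (· + L.length) (rename (· + 1) u) := by
      rw [rename_rename]
      congr 1
      funext k
      exact (Nat.succ_add_eq_add_succ k L.length).symm
    rw [plug, plug, den_app_esub, hu]
    exact dominates_esub_left (ih _) e τ

end TypingSystem

section Normalisation

open WCtx Relation

variable {ι : Type*} {Step : ι → Lm → Lm → Prop} {den : Lm → Ty → Set WCtx}

theorem exists_reflTransGen_normal_of_mem
    (hstep : ∀ r a b, Step r a b → ∀ τ, Dominates (den a τ) (den b τ))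
    {t : Lm} {Γ : Ctx} {τ : Ty} {n : ℕ} (ht : (Γ, n) ∈ den t τ) :
    ∃ p, ReflTransGen (fun a b => ∃ r, Step r a b) t p ∧ ∀ u r, ¬ Step r p u := by
  induction n using Nat.strong_induction_on generalizing t with
  | _ n ih =>
    by_cases hnormal : ∀ u r, ¬ Step r t u
    · exact ⟨t, .refl, hnormal⟩
    · push Not at hnormal
      obtain ⟨u, r, hu⟩ := hnormal
      obtain ⟨m, hlt, hm⟩ := (hstep _ _ _ hu τ).exists_lt ht
      obtain ⟨p, hup, hp⟩ := ih m hlt hm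
      exact ⟨p, hup.head ⟨r, hu⟩, hp⟩

theorem exists_mem_of_reflTransGen
    (hstep : ∀ r a b, Step r a b → ∀ τ, Dominates (den a τ) (den b τ))
    {t p : Lm} (htp : ReflTransGen (fun a b => ∃ r, Step r a b) t p) {Γ : Ctx} {τ : Ty} {n : ℕ}
    (hp : (Γ, n) ∈ den p τ) : ∃ m, (Γ, m) ∈ den t τ := by
  induction htp using ReflTransGen.head_induction_on with
  | refl => exact ⟨n, hp⟩
  | head hab _ ih =>
    obtain ⟨r, hr⟩ := hab
    obtain ⟨m, hm⟩ := ih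
    exact (hstep _ _ _ hr τ).exists_mem hm

theorem exists_mem_iff_exists_reflTransGen_normal
    (hstep : ∀ r a b, Step r a b → ∀ τ, Dominates (den a τ) (den b τ))
    (hnormal : ∀ p, (∀ u r, ¬ Step r p u) → ∃ Γ τ n, (Γ, n) ∈ den p τ) (t : Lm) :
    (∃ Γ τ n, (Γ, n) ∈ den t τ) ↔
      ∃ p, ReflTransGen (fun a b => ∃ r, Step r a b) t p ∧ ∀ u r, ¬ Step r p u := by
  constructor
  · rintro ⟨Γ, τ, n, ht⟩
    exact exists_reflTransGen_normal_of_mem hstep ht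
  · rintro ⟨p, htp, hp⟩
    obtain ⟨Γ, τ, n, hn⟩ := hnormal p hp
    obtain ⟨m, hm⟩ := exists_mem_of_reflTransGen hstep htp hn
    exact ⟨Γ, τ, m, hm⟩

end Normalisation

namespace DerN

open Lm WCtx
open scoped Pointwise

/-- The judgements of system N for `t` at type `τ`. -/
def judgements (t : Lm) (τ : Ty) : Set WCtx := {w | DerN w.1 t τ w.2}

theorem judgements_app (t u : Lm) (τ : Ty) : judgements (.app t u) τ =
    ⋃ M : List Ty, judgements t (.arr M τ) + bag (judgements u) M + tick := by
  ext ⟨Γ, n⟩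
  rw [Set.mem_iUnion]
  constructor
  · rintro (_ | ⟨prs, ht, hu⟩)
    exact ⟨_, _, ⟨(_, _), ht, (_, _), mem_bag_coe.2 ⟨prs, hu, rfl, rfl, rfl⟩, rfl⟩, _, rfl,
      Prod.ext (add_zero _) rfl⟩
  · rintro ⟨M, _, ⟨⟨Δ, k⟩, ht, ⟨Θ, m⟩, hu, rfl⟩, _, rfl, ⟨⟩⟩
    obtain ⟨prs, hprs, rfl, rfl, rfl⟩ := mem_bag_coe.1 hu
    simpa [judgements] using DerN.app prs ht hprs

theorem judgements_esub (t u : Lm) (τ : Ty) : judgements (.esub t u) τ =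
    ⋃ M : List Ty, pop M (judgements t τ) + bag (judgements u) M + tick := by
  ext ⟨Γ, n⟩
  rw [Set.mem_iUnion]
  constructor
  · rintro (_ | _ | _ | ⟨prs, ht, hM, hu⟩)
    refine ⟨_, _, ⟨(_, _), ?_, (_, _), mem_bag_coe.2 ⟨prs, hu, rfl, rfl, rfl⟩, rfl⟩, _, rfl,
      Prod.ext (add_zero _) rfl⟩
    change DerN (Ctx.cons _ (Ctx.tail _)) t _ _
    rwa [hM, Ctx.cons_head_tail]
  · rintro ⟨M, _, ⟨⟨Δ, k⟩, ht, ⟨Θ, m⟩, hu, rfl⟩, _, rfl, ⟨⟩⟩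
    obtain ⟨prs, hprs, rfl, rfl, rfl⟩ := mem_bag_coe.1 hu
    simpa [judgements] using DerN.es prs ht rfl hprs

theorem judgements_var (k : ℕ) (τ : Ty) :
    judgements (.var k) τ = {(Ctx.single k {τ}, 1)} := by
  ext ⟨Γ, n⟩
  constructor
  · rintro ⟨⟩
    rfl
  · rintro ⟨⟩
    exact .ax k τ

theorem judgements_lam (t : Lm) (τ : Ty) :
    judgements (.lam t) τ = WCtx.abs (judgements t) τ := by
  ext ⟨Γ, n⟩
  constructor
  · rintro (_ | _ | @⟨Γ, _, _, n, M, ht, hM⟩)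
    refine ⟨(Ctx.tail Γ, n), ?_, _, rfl, Prod.ext (add_zero _) rfl⟩
    change DerN (Ctx.cons M (Ctx.tail _)) t _ _
    rwa [hM, Ctx.cons_head_tail]
  · intro h
    cases τ with
    | base | mult => exact h.elim
    | arr M τ =>
      obtain ⟨⟨Δ, k⟩, ht, _, rfl, ⟨⟩⟩ := h
      simpa [judgements] using DerN.abs M ht rfl

theorem one_le_of_mem_judgements {t : Lm} {τ : Ty} {w : WCtx} (h : w ∈ judgements t τ) :
    1 ≤ w.2 := by
  obtain ⟨Γ, n⟩ := w
  cases h <;> exact Nat.le_add_left 1 _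

/-- System N. -/
def system : TypingSystem where
  den := judgements
  lin τ := τ
  args M := M
  parts τ := {[τ]}
  values := Set.univ
  den_app := judgements_app
  den_esub := judgements_esub
  den_var := judgements_var
  den_lam := judgements_lam
  den_value _ τ := by simp
  bag_value _ _ := rfl
  one_le_of_mem _ := one_le_of_mem_judgements
  var_mem_values _ := trivial
  lam_mem_values _ := trivial
  rename_mem_values _ := trivial

theorem dominates_of_stepN {r : NRule} {t u : Lm} (h : StepN r t u) (τ : Ty) :
    Dominates (judgements t τ) (judgements u τ) := by
  induction h generalizing τ with
  | dB L t u => exact TypingSystem.dominates_dB (S := system) L t u τ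
  | s t u => exact TypingSystem.dominates_esub_subst0 (S := system) trivial t τ
  | appL u _ ih => exact TypingSystem.dominates_app_left (S := system) ih u τ
  | lam _ ih =>
    rw [judgements_lam, judgements_lam]
    exact Dominates.abs ih τ
  | esubL u _ ih => exact TypingSystem.dominates_esub_left (S := system) ih u τ

theorem exists_add_le_of_redCntN {t p : Lm} {q : ℕ × ℕ} (h : RedCntN t q p) {Γ : Ctx} {τ : Ty}
    {n : ℕ} (ht : DerN Γ t τ n) : ∃ m, DerN Γ p τ m ∧ q.1 + q.2 + m ≤ n := by
  induction h generalizing n with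
  | refl t => exact ⟨n, ht, by simp⟩
  | db hstep _ ih | s hstep _ ih =>
    obtain ⟨k, hlt, hk⟩ := (dominates_of_stepN hstep τ).exists_lt ht
    obtain ⟨m, hm, hle⟩ := ih hk
    exact ⟨m, hm, by dsimp only at hle ⊢; omega⟩

theorem nsize_le {Γ : Ctx} {t : Lm} {τ : Ty} {n : ℕ} (h : DerN Γ t τ n) : nsize t ≤ n := by
  induction h <;> simp only [nsize] <;> omega

theorem size_bound {t p : Lm} {b e : ℕ} (h : RedCntN t (b, e) p) {Γ : Ctx} {τ : Ty} {n : ℕ}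
    (ht : DerN Γ t τ n) : b + e + nsize p ≤ n := by
  obtain ⟨m, hm, hle⟩ := exists_add_le_of_redCntN h ht
  exact (Nat.add_le_add_left hm.nsize_le _).trans hle

theorem typable_of_normal (t : Lm) (ht : ∀ u r, ¬ StepN r t u) :
    (∃ Γ τ n, DerN Γ t τ n) ∧ ((∀ s, t ≠ .lam s) → ∀ τ, ∃ Γ n, DerN Γ t τ n) := by
  induction t with
  | var k => exact ⟨⟨_, _, _, .ax k (.base 0)⟩, fun _ τ => ⟨_, _, .ax k τ⟩⟩
  | esub t u => exact (ht _ _ (.s t u)).elim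
  | lam s ih =>
    obtain ⟨⟨Γ, τ, n, h⟩, -⟩ := ih fun s' r h => ht _ r (.lam h)
    exact ⟨⟨_, _, _, .abs (Γ 0).toList h (Multiset.coe_toList _)⟩, fun h => (h s rfl).elim⟩
  | app t u ih _ =>
    have not_lam : ∀ s, t ≠ .lam s := by
      rintro s rfl
      exact ht _ _ (.dB [] s u)
    have typable (τ : Ty) : ∃ Γ n, DerN Γ (.app t u) τ n := by
      obtain ⟨Γ, n, h⟩ := (ih fun t' r h => ht _ r (.appL u h)).2 not_lam (.arr [] τ)
      exact ⟨_, _, .app [] h (by simp)⟩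
    obtain ⟨Γ, n, h⟩ := typable (.base 0)
    exact ⟨⟨Γ, _, n, h⟩, fun _ => typable⟩

theorem typable_iff_normalising (t : Lm) : (∃ Γ τ n, DerN Γ t τ n) ↔
    ∃ p, Relation.ReflTransGen (fun a b => ∃ r, StepN r a b) t p ∧ ∀ u r, ¬ StepN r p u :=
  exists_mem_iff_exists_reflTransGen_normal (den := judgements) (fun _ _ _ => dominates_of_stepN)
    (fun p hp => (typable_of_normal p hp).1) t

end DerN

namespace DerV

open Lm WCtx
open scoped Pointwise

/-- The judgements of system V for `t` at type `τ`. -/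
def judgements (t : Lm) (τ : Ty) : Set WCtx := {w | DerV w.1 t τ w.2}

theorem judgements_app (t u : Lm) (τ : Ty) : judgements (.app t u) τ =
    ⋃ M, judgements t (.mult [.arr M τ]) + bag (judgements u) ↑[Ty.mult M] + tick := by
  ext ⟨Γ, n⟩
  simp only [Set.mem_iUnion, Multiset.coe_singleton, bag_singleton]
  constructor
  · rintro (_ | _ | _ | ⟨ht, hu⟩)
    exact ⟨_, _, ⟨(_, _), ht, (_, _), hu, rfl⟩, _, rfl, Prod.ext (add_zero _) rfl⟩
  · rintro ⟨M, _, ⟨⟨Δ, k⟩, ht, ⟨Θ, m⟩, hu, rfl⟩, _, rfl, ⟨⟩⟩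
    simpa [judgements] using DerV.app ht hu

theorem judgements_esub (t u : Lm) (τ : Ty) : judgements (.esub t u) τ =
    ⋃ M : List Ty, pop M (judgements t τ) + bag (judgements u) ↑[Ty.mult M] + tick := by
  ext ⟨Γ, n⟩
  simp only [Set.mem_iUnion, Multiset.coe_singleton, bag_singleton]
  constructor
  · rintro (_ | ⟨ht, hu, hM⟩)
    refine ⟨_, _, ⟨(_, _), ?_, (_, _), hu, rfl⟩, _, rfl, Prod.ext (add_zero _) rfl⟩
    change DerV (Ctx.cons _ (Ctx.tail _)) t _ _
    rwa [hM, Ctx.cons_head_tail]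
  · rintro ⟨M, _, ⟨⟨Δ, k⟩, ht, ⟨Θ, m⟩, hu, rfl⟩, _, rfl, ⟨⟩⟩
    simpa [judgements] using DerV.es ht hu rfl

theorem judgements_var_mult (k : ℕ) (M : List Ty) :
    judgements (.var k) (.mult M) = {(Ctx.single k M, M.length)} := by
  ext ⟨Γ, n⟩
  constructor
  · rintro ⟨⟩
    rfl
  · rintro ⟨⟩
    exact .ax k M

theorem mem_abs_judgements_iff {t : Lm} {τ : Ty} {w : WCtx} :
    w ∈ WCtx.abs (judgements t) τ ↔ ∃ p : Ctx × List Ty × Ty × ℕ,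
      (DerV p.1 t p.2.2.1 p.2.2.2 ∧ Multiset.ofList p.2.1 = p.1 0) ∧
        Ty.arr p.2.1 p.2.2.1 = τ ∧ (Ctx.tail p.1, p.2.2.2 + 1) = w := by
  constructor
  · intro h
    cases τ with
    | base | mult => exact h.elim
    | arr M τ =>
      obtain ⟨⟨Γ, n⟩, ht, _, rfl, rfl⟩ := h
      exact ⟨(Ctx.cons M Γ, M, τ, n), ⟨ht, rfl⟩, rfl, Prod.ext (add_zero Γ).symm rfl⟩
  · rintro ⟨⟨Γ, M, τ, n⟩, ⟨ht, hM⟩, rfl, rfl⟩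
    refine ⟨(Ctx.tail Γ, n), ?_, _, rfl, Prod.ext (add_zero _) rfl⟩
    change DerV (Ctx.cons _ (Ctx.tail Γ)) t τ n
    rwa [hM, Ctx.cons_head_tail]

theorem judgements_lam_mult (t : Lm) (M : List Ty) :
    judgements (.lam t) (.mult M) = bag (WCtx.abs (judgements t)) M := by
  ext ⟨Γ, n⟩
  rw [mem_bag_coe_iff_exists_list fun τ w => mem_abs_judgements_iff]
  simp only [sum_map_pair, Prod.mk.injEq, List.sum_map_add, List.map_const',
    List.sum_replicate, smul_eq_mul, mul_one]
  constructor
  · rintro (_ | _ | ⟨prs, ht, hM⟩)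
    exact ⟨prs, fun p hp => ⟨ht p hp, hM p hp⟩, rfl, rfl, rfl⟩
  · rintro ⟨prs, hprs, rfl, rfl, rfl⟩
    exact .abs prs (fun p hp => (hprs p hp).1) fun p hp => (hprs p hp).2

theorem judgements_value_mult {v : Lm} (hv : IsVal v) (M : List Ty) :
    judgements v (.mult M) = bag (fun σ => judgements v (.mult [σ])) M := by
  cases v with
  | var k =>
    simp only [judgements_var_mult]
    exact (DFunLike.congr_fun (bag_hom_singleton (Set.singletonAddMonoidHom.comp
      ((Ctx.singleHom k).prod Multiset.cardHom))) (M : Multiset Ty)).symm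
  | lam t => simp only [judgements_lam_mult, Multiset.coe_singleton, bag_singleton]
  | app | esub => exact hv.elim

theorem judgements_value {v : Lm} (hv : IsVal v) (τ : Ty) : judgements v τ =
    ⋃ M ∈ {M | Ty.mult M = τ}, bag (fun σ => judgements v (.mult [σ])) (M : List Ty) := by
  cases τ with
  | mult M =>
    simp only [Ty.mult.injEq, Set.ofPred_eq_eq_singleton, Set.biUnion_singleton]
    exact judgements_value_mult hv M
  | base | arr =>
    simp only [reduceCtorEq, Set.ofPred_false, Set.biUnion_empty]
    refine Set.eq_empty_of_forall_notMem fun ⟨Γ, n⟩ hw => ?_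
    cases v with
    | var | lam => cases hw
    | app | esub => exact hv.elim

theorem one_le_of_mem_judgements {v : Lm} (hv : IsVal v) {τ : Ty} {w : WCtx}
    (hw : w ∈ judgements v (.mult [τ])) : 1 ≤ w.2 := by
  cases v with
  | var k =>
    rw [judgements_var_mult] at hw
    exact hw ▸ le_rfl
  | lam t =>
    rw [judgements_lam_mult, Multiset.coe_singleton, bag_singleton, mem_abs_judgements_iff] at hw
    obtain ⟨p, -, -, rfl⟩ := hw
    exact Nat.le_add_left 1 _
  | app | esub => exact hv.elim

/-- System V. -/
def system : TypingSystem where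
  den := judgements
  lin τ := .mult [τ]
  args M := [.mult M]
  parts τ := {M | .mult M = τ}
  values := {v | IsVal v}
  den_app := judgements_app
  den_esub := judgements_esub
  den_var k τ := judgements_var_mult k [τ]
  den_lam t τ := by rw [judgements_lam_mult, Multiset.coe_singleton, bag_singleton]
  den_value := judgements_value
  bag_value hv M := by rw [Multiset.coe_singleton, bag_singleton, judgements_value_mult hv]
  one_le_of_mem hv _ _ := one_le_of_mem_judgements hv
  var_mem_values _ := trivial
  lam_mem_values _ := trivial
  rename_mem_values hv := hv.rename _

theorem dominates_app_right (t : Lm) {u u' : Lm}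
    (h : ∀ τ, Dominates (judgements u τ) (judgements u' τ)) (τ : Ty) :
    Dominates (judgements (.app t u) τ) (judgements (.app t u') τ) := by
  simp only [judgements_app, Multiset.coe_singleton, bag_singleton]
  exact Dominates.iUnion fun M => ((h _).add_left _).add_right _

theorem dominates_esub_right (t : Lm) {u u' : Lm}
    (h : ∀ τ, Dominates (judgements u τ) (judgements u' τ)) (τ : Ty) :
    Dominates (judgements (.esub t u) τ) (judgements (.esub t u') τ) := by
  simp only [judgements_esub, Multiset.coe_singleton, bag_singleton]
  exact Dominates.iUnion fun M => ((h _).add_left _).add_right _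

theorem judgements_esub_esub (t s e : Lm) (τ : Ty) : judgements (.esub t (.esub s e)) τ =
    judgements (.esub (.esub (rename (liftR (· + 1)) t) s) e) τ := by
  have judgements_rename : judgements (rename (liftR (· + 1)) t) τ =
      transport (liftRel shiftRel) (judgements t τ) :=
    TypingSystem.den_rename_liftR_succ (S := system) t τ
  have pop_weaken_add (M : List Ty) (A B : Set WCtx) : pop M (transport shiftRel A + B) =
      A + pop M B := by rw [add_comm, pop_add_transport_shiftRel, add_comm]
  simp only [judgements_esub, Multiset.coe_singleton, bag_singleton, judgements_rename,
    pop_transport_liftRel, pop_iUnion, pop_add_tick, pop_weaken_add, Set.iUnion_add, Set.add_iUnion]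
  rw [Set.iUnion_comm]
  simp only [add_comm, add_left_comm]

theorem dominates_sv (L : List Lm) (t : Lm) {v : Lm} (hv : IsVal v) (τ : Ty) :
    Dominates (judgements (.esub t (plug L v)) τ)
      (judgements (plug L (substIn L.length v t)) τ) := by
  induction L generalizing t τ with
  | nil => exact TypingSystem.dominates_esub_subst0 (S := system) hv t τ
  | cons e L ih =>
    rw [plug, plug, judgements_esub_esub, List.length_cons, substIn_succ]
    exact TypingSystem.dominates_esub_left (S := system) (ih _) e τ

theorem dominates_of_stepV {r : VRule} {t u : Lm} (h : StepV r t u) (τ : Ty) :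
    Dominates (judgements t τ) (judgements u τ) := by
  induction h generalizing τ with
  | dB L t u => exact TypingSystem.dominates_dB (S := system) L t u τ
  | sv L t v hv => exact dominates_sv L t hv τ
  | appL u _ ih => exact TypingSystem.dominates_app_left (S := system) ih u τ
  | appR t _ ih => exact dominates_app_right t ih τ
  | esubL u _ ih => exact TypingSystem.dominates_esub_left (S := system) ih u τ
  | esubR t _ ih => exact dominates_esub_right t ih τ

theorem exists_add_le_of_redCntV {t p : Lm} {q : ℕ × ℕ} (h : RedCntV t q p) {Γ : Ctx} {τ : Ty}
    {n : ℕ} (ht : DerV Γ t τ n) : ∃ m, DerV Γ p τ m ∧ q.1 + q.2 + m ≤ n := by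
  induction h generalizing n with
  | refl t => exact ⟨n, ht, by simp⟩
  | db hstep _ ih | sv hstep _ ih =>
    obtain ⟨k, hlt, hk⟩ := (dominates_of_stepV hstep τ).exists_lt ht
    obtain ⟨m, hm, hle⟩ := ih hk
    exact ⟨m, hm, by dsimp only at hle ⊢; omega⟩

theorem vsize_le {Γ : Ctx} {t : Lm} {τ : Ty} {n : ℕ} (h : DerV Γ t τ n) : vsize t ≤ n := by
  induction h <;> simp only [vsize] <;> omega

theorem size_bound {t p : Lm} {b e : ℕ} (h : RedCntV t (b, e) p) {Γ : Ctx} {τ : Ty} {n : ℕ}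
    (ht : DerV Γ t τ n) : b + e + vsize p ≤ n := by
  obtain ⟨m, hm, hle⟩ := exists_add_le_of_redCntV h ht
  exact (Nat.add_le_add_left hm.vsize_le _).trans hle

-- The second part provides the types `[[] → τ]` for functions and arbitrary multiset types for
-- explicitly substituted terms; in a normal term neither has the form `L⟨λx.s⟩`.
theorem typable_of_normal (t : Lm) (ht : ∀ u r, ¬ StepV r t u) :
    (∃ Γ n, DerV Γ t (.mult []) n) ∧
    ((∀ L s, t ≠ plug L (.lam s)) → ∀ M, ∃ Γ n, DerV Γ t (.mult M) n) := by
  induction t with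
  | var k => exact ⟨⟨_, _, .ax k []⟩, fun _ M => ⟨_, _, .ax k M⟩⟩
  | lam s => exact ⟨⟨_, _, .abs [] (by simp) (by simp)⟩, fun h => (h [] s rfl).elim⟩
  | app t u iht ihu =>
    obtain ⟨⟨Δ, m, hu⟩, -⟩ := ihu fun u' r h => ht _ r (.appR t h)
    have not_lam : ∀ L s, t ≠ plug L (.lam s) := by
      rintro L s rfl
      exact ht _ _ (.dB L s u)
    have typable_t := (iht fun t' r h => ht _ r (.appL u h)).2 not_lam
    have typable (M : List Ty) : ∃ Γ n, DerV Γ (.app t u) (.mult M) n := by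
      obtain ⟨Γ, n, h⟩ := typable_t [.arr [] (.mult M)]
      exact ⟨_, _, .app h hu⟩
    exact ⟨typable _, fun _ => typable⟩
  | esub t u iht ihu =>
    obtain ⟨typable_nil, typable_mult⟩ := iht fun t' r h => ht _ r (.esubL u h)
    have not_lam : ∀ L s, u ≠ plug L (.lam s) := by
      rintro L s rfl
      exact ht _ _ (.sv L t (.lam s) trivial)
    have typable_u := (ihu fun u' r h => ht _ r (.esubR t h)).2 not_lam
    have typable_esub {τ : Ty} : (∃ Γ n, DerV Γ t τ n) → ∃ Γ n, DerV Γ (.esub t u) τ n := by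
      rintro ⟨Γ, n, h⟩
      obtain ⟨Δ, m, hu⟩ := typable_u (Γ 0).toList
      exact ⟨_, _, .es h hu (Multiset.coe_toList _)⟩
    refine ⟨typable_esub typable_nil, fun h M => typable_esub (typable_mult ?_ M)⟩
    rintro L s rfl
    exact h (u :: L) s rfl

theorem typable_iff_normalising (t : Lm) : (∃ Γ τ n, DerV Γ t τ n) ↔
    ∃ p, Relation.ReflTransGen (fun a b => ∃ r, StepV r a b) t p ∧ ∀ u r, ¬ StepV r p u := by
  refine exists_mem_iff_exists_reflTransGen_normal (den := judgements)
    (fun _ _ _ => dominates_of_stepV) (fun p hp => ?_) t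
  obtain ⟨⟨Γ, n, h⟩, -⟩ := typable_of_normal p hp
  exact ⟨Γ, _, n, h⟩

end DerV

theorem cbn_cbv_normalisation_general (t : Lm) :
    ((∃ (Γ : Ctx) (τ : Ty) (n : ℕ), DerN Γ t τ n) ↔
      (∃ p : Lm, Relation.ReflTransGen (fun a b => ∃ r, StepN r a b) t p ∧
        ∀ (u : Lm) (r : NRule), ¬ StepN r p u)) ∧
    (∀ (Γ : Ctx) (τ : Ty) (n : ℕ) (p : Lm) (b e : ℕ),
      DerN Γ t τ n → RedCntN t (b, e) p → n ≥ b + e + Lm.nsize p) ∧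
    ((∃ (Γ : Ctx) (τ : Ty) (n : ℕ), DerV Γ t τ n) ↔
      (∃ p : Lm, Relation.ReflTransGen (fun a b => ∃ r, StepV r a b) t p ∧
        ∀ (u : Lm) (r : VRule), ¬ StepV r p u)) ∧
    (∀ (Γ : Ctx) (τ : Ty) (n : ℕ) (p : Lm) (b e : ℕ),
      DerV Γ t τ n → RedCntV t (b, e) p → n ≥ b + e + Lm.vsize p) :=
  ⟨DerN.typable_iff_normalising t, fun _ _ _ _ _ _ ht hred => DerN.size_bound hred ht,
    DerV.typable_iff_normalising t, fun _ _ _ _ _ _ ht hred => DerV.size_bound hred ht⟩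

/-- **Characterisation of CBN and CBV normalisation** (Theorem 5):
`t` is 𝒩-typable iff `t` is `→n`-normalising, with
`|Φ|_n ≥ b + e + |p|_n` for any 𝒩-derivation `Φ` and any normalising
reduction `t →n* p` with `b` dB-steps and `e` s-steps; and symmetrically for
system 𝒱 and `→v`. -/
theorem cbn_cbv_normalisation (t : Lm) :
    ((∃ (Γ : Ctx) (τ : Ty) (n : ℕ), DerN Γ t τ n) ↔
      (∃ p : Lm, Relation.ReflTransGen (fun a b => ∃ r, StepN r a b) t p ∧
        ∀ (u : Lm) (r : NRule), ¬ StepN r p u)) ∧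
    (∀ (Γ : Ctx) (τ : Ty) (n : ℕ) (p : Lm) (b e : ℕ),
      DerN Γ t τ n → RedCntN t (b, e) p →
      (∀ (u : Lm) (r : NRule), ¬ StepN r p u) →
      n ≥ b + e + Lm.nsize p) ∧
    ((∃ (Γ : Ctx) (τ : Ty) (n : ℕ), DerV Γ t τ n) ↔
      (∃ p : Lm, Relation.ReflTransGen (fun a b => ∃ r, StepV r a b) t p ∧
        ∀ (u : Lm) (r : VRule), ¬ StepV r p u)) ∧
    (∀ (Γ : Ctx) (τ : Ty) (n : ℕ) (p : Lm) (b e : ℕ),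
      DerV Γ t τ n → RedCntV t (b, e) p →
      (∀ (u : Lm) (r : VRule), ¬ StepV r p u) →
      n ≥ b + e + Lm.vsize p) := by
  obtain ⟨typableN, boundN, typableV, boundV⟩ := cbn_cbv_normalisation_general t
  exact ⟨typableN, fun Γ τ n p b e ht hred _ => boundN Γ τ n p b e ht hred,
    typableV, fun Γ τ n p b e ht hred _ => boundV Γ τ n p b e ht hred⟩
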